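/- There exists a constant C > 0, independent of ε and u, such that for every ε ∈ (0,1] and every smooth L-periodic function u: ( ∫₀^L (A^ε u)(x)² dx )^{1/2} ≤ C ‖u‖_{2,2}. -/

import Mathlib

/-!
The estimate is pointwise in `x`. By the product rule,
`∂(Ψ ∂(Ψ u)) = (Ψ'² + Ψ Ψ'') u + 3 Ψ Ψ' u' + Ψ² u''`, and the normalization `c_k` absorbs up to two
factors of the frequency `2πk/L`, so `|Ψ_k|`, `|Ψ_k'|` and `|Ψ_k''|` are at most `√(2 / L)`
uniformly in `k`. Summing against `λ_k²` bounds `|A^ε u|` by a multiple of `|u| + |u'| + |u''|`;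
squaring and integrating over a period gives the claim.
-/

open MeasureTheory

noncomputable section

/-- The normalizing constants `c_k = sqrt(2 / (L (1 + (2πk/L)² + (2πk/L)⁴)))`. -/
def cL (L : ℝ) (k : ℤ) : ℝ :=
  Real.sqrt (2 / (L * (1 + (2 * Real.pi * (k : ℝ) / L) ^ 2
    + (2 * Real.pi * (k : ℝ) / L) ^ 4)))

/-- The trigonometric basis functions `Ψ_k` on the torus `𝕋_L`. -/
def psi (L : ℝ) (k : ℤ) : ℝ → ℝ := fun x =>
  if 0 < k then cL L k * Real.cos (2 * Real.pi * (k : ℝ) * x / L)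
  else if k = 0 then cL L 0 / Real.sqrt 2
  else cL L k * Real.sin (2 * Real.pi * (k : ℝ) * x / L)

/-- `‖u‖₂²  = ∫₀^L u²`. -/
def norm2sq (L : ℝ) (u : ℝ → ℝ) : ℝ := ∫ x in (0 : ℝ)..L, (u x) ^ 2

/-- `‖u‖_{1,2}² = ∫₀^L (u² + u'²)`. -/
def norm12sq (L : ℝ) (u : ℝ → ℝ) : ℝ :=
  ∫ x in (0 : ℝ)..L, ((u x) ^ 2 + (deriv u x) ^ 2)

/-- `‖u‖_{2,2}² = ∫₀^L (u² + u'² + u''²)`. -/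
def norm22sq (L : ℝ) (u : ℝ → ℝ) : ℝ :=
  ∫ x in (0 : ℝ)..L, ((u x) ^ 2 + (deriv u x) ^ 2 + (deriv (deriv u) x) ^ 2)

/-- The operator `A^ε u = (1/2) Σ_k λ_k² ∂_x(Ψ_k ∂_x(Ψ_k u)) + ε ∂_x² u`. -/
def Aop (L : ℝ) (lam : ℤ → ℝ) (ε : ℝ) (u : ℝ → ℝ) : ℝ → ℝ := fun x =>
  (1 / 2) * (∑' k : ℤ,
      (lam k) ^ 2 * deriv (fun y => psi L k y * deriv (fun z => psi L k z * u z) y) x)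
    + ε * deriv (deriv u) x

lemma sq_abs_add_abs_add_abs_le (a b c : ℝ) :
    (|a| + |b| + |c|) ^ 2 ≤ 3 * (a ^ 2 + b ^ 2 + c ^ 2) := by
  simpa [Fin.sum_univ_three] using
    sq_sum_le_card_mul_sum_sq (s := Finset.univ) (f := ![|a|, |b|, |c|])

lemma sqrt_integral_sq_le {α : Type*} [MeasurableSpace α] {μ : Measure α} {f g : α → ℝ} {K : ℝ}
    (hK : 0 ≤ K) (hg : Integrable g μ) (hfg : ∀ᵐ x ∂μ, f x ^ 2 ≤ K ^ 2 * g x) :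
    √(∫ x, f x ^ 2 ∂μ) ≤ K * √(∫ x, g x ∂μ) :=
  calc
    √(∫ x, f x ^ 2 ∂μ) ≤ √(∫ x, K ^ 2 * g x ∂μ) := by
      -- On nonnegative functions only the majorant has to be integrable; `f` may be nonmeasurable.
      apply Real.sqrt_le_sqrt
      exact integral_mono_of_nonneg (ae_of_all μ fun x => sq_nonneg (f x)) (hg.const_mul _) hfg
    _ = K * √(∫ x, g x ∂μ) := by
      rw [integral_const_mul, Real.sqrt_mul (sq_nonneg K), Real.sqrt_sq hK]

section ProductRule

open scoped Topology

variable {𝕜 𝔸 : Type*} [NontriviallyNormedField 𝕜] [NormedCommRing 𝔸] [NormedAlgebra 𝕜 𝔸]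
  {f u : 𝕜 → 𝔸} {x : 𝕜}

lemma deriv_mul_deriv_mul (hf : ContDiffAt 𝕜 2 f x) (hu : ContDiffAt 𝕜 2 u x) :
    deriv (fun y => f y * deriv (fun z => f z * u z) y) x =
      (deriv f x ^ 2 + f x * deriv (deriv f) x) * u x
        + 3 • (f x * deriv f x * deriv u x) + f x ^ 2 * deriv (deriv u) x := by
  have hasDerivAt {g : 𝕜 → 𝔸} {y : 𝕜} (hg : ContDiffAt 𝕜 2 g y) : HasDerivAt g (deriv g y) y :=
    (hg.differentiableAt two_ne_zero).hasDerivAt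
  have hasDerivAt_deriv {g : 𝕜 → 𝔸} (hg : ContDiffAt 𝕜 2 g x) :
      HasDerivAt (deriv g) (deriv (deriv g) x) x :=
    ((hg.derivWithin (m := 1) (by norm_num)).differentiableAt one_ne_zero).hasDerivAt
  have inner_eq : (fun y => f y * deriv (fun z => f z * u z) y) =ᶠ[𝓝 x]
      fun y => f y * (deriv f y * u y + f y * deriv u y) := by
    filter_upwards [hf.eventually (by simp), hu.eventually (by simp)] with y hfy huy
    rw [((hasDerivAt hfy).fun_mul (hasDerivAt huy)).deriv]
  have outer := (hasDerivAt hf).fun_mul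
    (((hasDerivAt_deriv hf).fun_mul (hasDerivAt hu)).fun_add
      ((hasDerivAt hf).fun_mul (hasDerivAt_deriv hu)))
  rw [inner_eq.deriv_eq, outer.deriv]
  ring

lemma norm_deriv_mul_deriv_mul_le {M : ℝ} (hf : ContDiffAt 𝕜 2 f x) (hu : ContDiffAt 𝕜 2 u x)
    (hM : ∀ i ≤ 2, ‖iteratedDeriv i f x‖ ≤ M) :
    ‖deriv (fun y => f y * deriv (fun z => f z * u z) y) x‖ ≤
      3 * M ^ 2 * (‖u x‖ + ‖deriv u x‖ + ‖deriv (deriv u) x‖) := by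
  have h₀ : ‖f x‖ ≤ M := by simpa using hM 0
  have h₁ : ‖deriv f x‖ ≤ M := by simpa using hM 1
  have h₂ : ‖deriv (deriv f) x‖ ≤ M := by simpa [iteratedDeriv_succ] using hM 2
  have norm_mul_le_sq {a b : 𝔸} (ha : ‖a‖ ≤ M) (hb : ‖b‖ ≤ M) : ‖a * b‖ ≤ M ^ 2 :=
    (norm_mul_le_of_le ha hb).trans_eq (sq M).symm
  have coeff₀ : ‖deriv f x ^ 2 + f x * deriv (deriv f) x‖ ≤ 2 * M ^ 2 := by
    rw [sq (deriv f x), two_mul]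
    exact norm_add_le_of_le (norm_mul_le_sq h₁ h₁) (norm_mul_le_sq h₀ h₂)
  rw [deriv_mul_deriv_mul hf hu]
  calc
    _ ≤ 2 * M ^ 2 * ‖u x‖ + 3 * (M ^ 2 * ‖deriv u x‖) + M ^ 2 * ‖deriv (deriv u) x‖ := by
      refine norm_add₃_le.trans (add_le_add_three ?_ ?_ ?_)
      · exact norm_mul_le_of_le coeff₀ le_rfl
      · exact_mod_cast norm_nsmul_le.trans
          (mul_le_mul_of_nonneg_left (norm_mul_le_of_le (norm_mul_le_sq h₀ h₁) le_rfl) (by simp))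
      · rw [sq (f x)]
        exact norm_mul_le_of_le (norm_mul_le_sq h₀ h₀) le_rfl
    _ ≤ 3 * M ^ 2 * (‖u x‖ + ‖deriv u x‖ + ‖deriv (deriv u) x‖) := by
      have : 0 ≤ M ^ 2 * ‖u x‖ := by positivity
      have : 0 ≤ M ^ 2 * ‖deriv (deriv u) x‖ := by positivity
      linarith

end ProductRule

section CosineWave

/-- The wave `x ↦ a cos (w x + φ)` of amplitude `a`, angular frequency `w` and phase `φ`. Keeping
the phase as a parameter makes the family stable under differentiation and lets it contain all the
basis functions `Ψ_k`. -/
def cosWave (a w φ : ℝ) : ℝ → ℝ := fun x => a * Real.cos (w * x + φ)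

lemma contDiff_cosWave (a w φ : ℝ) {n : WithTop ℕ∞} : ContDiff ℝ n (cosWave a w φ) := by
  unfold cosWave
  fun_prop

lemma deriv_cosWave (a w φ : ℝ) : deriv (cosWave a w φ) = cosWave (a * w) w (φ + Real.pi / 2) := by
  funext x
  have phase : HasDerivAt (fun y => w * y + φ) w x := by
    simpa using ((hasDerivAt_id x).const_mul w).add_const φ
  rw [cosWave, ← add_assoc, Real.cos_add_pi_div_two]
  exact (phase.cos.const_mul a).deriv.trans (by ring)

lemma iteratedDeriv_cosWave (n : ℕ) (a w φ : ℝ) :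
    iteratedDeriv n (cosWave a w φ) = cosWave (a * w ^ n) w (φ + n * (Real.pi / 2)) := by
  induction n with
  | zero => simp
  | succ n ih =>
    rw [iteratedDeriv_succ, ih, deriv_cosWave]
    congr 1 <;> push_cast <;> ring

lemma abs_cosWave_le (a w φ x : ℝ) : |cosWave a w φ x| ≤ |a| := by
  rw [cosWave, abs_mul]
  exact mul_le_of_le_one_right (abs_nonneg a) (Real.abs_cos_le_one _)

end CosineWave

section Basis

lemma exists_psi_eq_cosWave (L : ℝ) (k : ℤ) :
    ∃ φ, psi L k = cosWave (cL L k) (2 * Real.pi * k / L) φ := by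
  rcases lt_trichotomy k 0 with hk | rfl | hk
  · refine ⟨-(Real.pi / 2), funext fun x => ?_⟩
    simp only [psi, cosWave, hk.not_gt, hk.ne, if_false, ← sub_eq_add_neg, Real.cos_sub_pi_div_two,
      div_mul_eq_mul_div]
  · refine ⟨Real.pi / 4, funext fun x => ?_⟩
    simp only [psi, cosWave, lt_irrefl, if_true, if_false, Int.cast_zero, mul_zero, zero_div,
      zero_mul, zero_add, Real.cos_pi_div_four, Real.sqrt_div_self]
    exact div_eq_mul_inv _ _
  · refine ⟨0, funext fun x => ?_⟩
    simp only [psi, cosWave, hk, if_true, add_zero, div_mul_eq_mul_div]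

lemma contDiff_psi (L : ℝ) (k : ℤ) {n : WithTop ℕ∞} : ContDiff ℝ n (psi L k) := by
  obtain ⟨φ, hφ⟩ := exists_psi_eq_cosWave L k
  exact hφ ▸ contDiff_cosWave _ _ _

variable {L : ℝ}

lemma abs_cL_mul_pow_le (hL : 0 < L) (k : ℤ) {i : ℕ} (hi : i ≤ 2) :
    |cL L k * (2 * Real.pi * k / L) ^ i| ≤ √(2 / L) := by
  rw [cL]
  generalize 2 * Real.pi * (k : ℝ) / L = w
  have pow_le : (w ^ i) ^ 2 ≤ 1 + w ^ 2 + w ^ 4 := by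
    interval_cases i <;> nlinarith [sq_nonneg w, sq_nonneg (w ^ 2)]
  apply Real.abs_le_sqrt
  rw [mul_pow, Real.sq_sqrt (by positivity), ← div_div, div_mul_eq_mul_div]
  exact div_le_of_le_mul₀ (by positivity) (by positivity) (by gcongr)

lemma abs_iteratedDeriv_psi_le (hL : 0 < L) (k : ℤ) {i : ℕ} (hi : i ≤ 2) (x : ℝ) :
    |iteratedDeriv i (psi L k) x| ≤ √(2 / L) := by
  obtain ⟨φ, hφ⟩ := exists_psi_eq_cosWave L k
  rw [hφ, iteratedDeriv_cosWave]
  exact (abs_cosWave_le _ _ _ x).trans (abs_cL_mul_pow_le hL k hi)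

end Basis

lemma abs_Aop_le {L : ℝ} (hL : 0 < L) {lam : ℤ → ℝ} (hsum : Summable fun k => lam k ^ 2)
    (ε : ℝ) {u : ℝ → ℝ} {x : ℝ} (hu : ContDiffAt ℝ 2 u x) :
    |Aop L lam ε u x| ≤
      (3 / L * ∑' k, lam k ^ 2 + |ε|) * (|u x| + |deriv u x| + |deriv (deriv u) x|) := by
  set T := |u x| + |deriv u x| + |deriv (deriv u) x|
  have term_le (k : ℤ) :
      ‖lam k ^ 2 * deriv (fun y => psi L k y * deriv (fun z => psi L k z * u z) y) x‖ ≤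
        lam k ^ 2 * (3 * √(2 / L) ^ 2 * T) := by
    rw [norm_mul, norm_pow, Real.norm_eq_abs, sq_abs]
    gcongr
    exact norm_deriv_mul_deriv_mul_le (contDiff_psi L k).contDiffAt hu
      fun i hi => abs_iteratedDeriv_psi_le hL k hi x
  have noise_le := tsum_of_norm_bounded (hsum.hasSum.mul_right _) term_le
  have viscosity_le : |ε * deriv (deriv u) x| ≤ |ε| * T := by
    rw [abs_mul]
    gcongr
    exact le_add_of_nonneg_left (by positivity)
  calc
    |Aop L lam ε u x| ≤ 1 / 2 * ((∑' k, lam k ^ 2) * (3 * √(2 / L) ^ 2 * T)) + |ε| * T := by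
      refine (abs_add_le _ _).trans (add_le_add ?_ viscosity_le)
      rw [abs_mul, abs_of_pos one_half_pos]
      gcongr
      exact noise_le
    _ = (3 / L * ∑' k, lam k ^ 2 + |ε|) * T := by
      rw [Real.sq_sqrt (by positivity)]
      ring

theorem Aop_growth_estimate_general {L : ℝ} (hL : 0 < L) {lam : ℤ → ℝ}
    (hsum : Summable fun k => lam k ^ 2) (ε : ℝ) {u : ℝ → ℝ} (hu : ContDiff ℝ 2 u) :
    √(∫ x in (0 : ℝ)..L, Aop L lam ε u x ^ 2) ≤
      √3 * (3 / L * ∑' k, lam k ^ 2 + |ε|) * √(norm22sq L u) := by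
  set D := 3 / L * ∑' k, lam k ^ 2 + |ε|
  have sq_le (x : ℝ) : Aop L lam ε u x ^ 2 ≤
      (√3 * D) ^ 2 * (u x ^ 2 + deriv u x ^ 2 + deriv (deriv u) x ^ 2) := by
    calc
      Aop L lam ε u x ^ 2 ≤ (D * (|u x| + |deriv u x| + |deriv (deriv u) x|)) ^ 2 := by
        rw [← sq_abs (Aop L lam ε u x)]
        gcongr
        exact abs_Aop_le hL hsum ε hu.contDiffAt
      _ ≤ D ^ 2 * (3 * (u x ^ 2 + deriv u x ^ 2 + deriv (deriv u) x ^ 2)) := by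
        rw [mul_pow]
        gcongr
        exact sq_abs_add_abs_add_abs_le _ _ _
      _ = (√3 * D) ^ 2 * (u x ^ 2 + deriv u x ^ 2 + deriv (deriv u) x ^ 2) := by
        rw [mul_pow, Real.sq_sqrt zero_le_three]
        ring
  have continuous_jet :
      Continuous fun x => u x ^ 2 + deriv u x ^ 2 + deriv (deriv u) x ^ 2 := by
    have hu' : ContDiff ℝ 1 (deriv u) := hu.deriv'
    have := hu.continuous
    have := hu'.continuous
    have := hu'.continuous_deriv_one
    fun_prop
  rw [norm22sq, intervalIntegral.integral_of_le hL.le, intervalIntegral.integral_of_le hL.le]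
  exact sqrt_integral_sq_le (by positivity) (continuous_jet.intervalIntegrable 0 L).1
    (ae_of_all _ sq_le)

/-- Growth estimate (condition (H4')): `‖A^ε u‖_{L²} ≤ C ‖u‖_{2,2}`, with a constant
independent of `ε` and `u`. -/
theorem Aop_growth_estimate (L : ℝ) (hL : 0 < L) (lam : ℤ → ℝ)
    (hpos : ∀ k : ℤ, 0 ≤ lam k) (hsum : Summable fun k : ℤ => (lam k) ^ 2) :
    ∃ C : ℝ, 0 < C ∧
      ∀ ε : ℝ, 0 < ε → ε ≤ 1 →
      ∀ u : ℝ → ℝ, ContDiff ℝ (⊤ : ℕ∞) u → (∀ x : ℝ, u (x + L) = u x) →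
        Real.sqrt (∫ x in (0 : ℝ)..L, (Aop L lam ε u x) ^ 2)
          ≤ C * Real.sqrt (norm22sq L u) := by
  refine ⟨√3 * (3 / L * ∑' k, lam k ^ 2 + 1), by positivity, fun ε hε hε1 u hu _ => ?_⟩
  refine (Aop_growth_estimate_general hL hsum ε (hu.of_le (by norm_cast))).trans ?_
  rw [abs_of_pos hε]
  gcongr

end
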